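/- Let ℓ and b be positive integers, T = bℓ, η > 0, q ∈ [0, 1], and let p^1, …, p^T ∈ [0, 1]² be a fixed sequence of payoff vectors for two experts with Σ_{t=1}^T p^t[1] ≥ Σ_{t=1}^T p^t[2] (expert 1 is best in hindsight). For each block i let P^i = Σ_{t=(i−1)ℓ+1}^{iℓ} p^t. Then the expected regret of DFPL(T, ℓ, η) (run with step-phase noise η′ = √ℓ and step-phase probability q) satisfies E[R] ≤ 2qb√ℓ − q·Σ_{i=1}^b max(0, P^i[2] − P^i[1]) + (ℓ/η)·Σ_{i=1}^b |P^i[1] − P^i[2]| + η. -/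

import Mathlib

open MeasureTheory ProbabilityTheory Finset

/-- The uniform probability measure on the interval `[0, η]`. -/
noncomputable def uniformIcc (η : ℝ) : Measure ℝ :=
  (ENNReal.ofReal η)⁻¹ • volume.restrict (Set.Icc 0 η)

/-- The uniform probability measure on the square `[0, η]²`. -/
noncomputable def uniformSq (η : ℝ) : Measure (Fin 2 → ℝ) :=
  Measure.pi fun _ => uniformIcc η

/-- The Bernoulli(q) measure on `Bool` (`true` with probability `q`). -/
noncomputable def bernoulliBool (q : ℝ) : Measure Bool :=
  ENNReal.ofReal q • Measure.dirac true + ENNReal.ofReal (1 - q) • Measure.dirac false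

/-- Sample space for DFPL with `b` blocks of length `ℓ`: a Bernoulli coin `Y_i` for each
block, a fresh uniform perturbation in `[0,η']²` for every time step of every block
(used in step phases), and a uniform perturbation in `[0,η]²` for each block (used in
block phases). -/
abbrev DFPLSpace (b ℓ : ℕ) : Type :=
  (Fin b → Bool) × ((Fin b × Fin ℓ) → (Fin 2 → ℝ)) × (Fin b → (Fin 2 → ℝ))

/-- The joint distribution of all the (mutually independent) random draws of DFPL. -/
noncomputable def DFPLMeasure (b ℓ : ℕ) (q η' η : ℝ) : Measure (DFPLSpace b ℓ) :=
  (Measure.pi fun _ : Fin b => bernoulliBool q).prod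
    ((Measure.pi fun _ : Fin b × Fin ℓ => uniformSq η').prod
      (Measure.pi fun _ : Fin b => uniformSq η))

/-!
For two experts, Follow the Perturbed Leader depends on the past only through the lead `D` of
expert 1 and on the noise only through the difference `x` of the two perturbations: expert 2 is
followed exactly when `D + x ≤ 0`. The potential `Φ D = E[min (D + x) 0]` has derivative
`P(D + x ≤ 0)`, and if the noise has density at most `C`, replacing `D` by `D + δ` changes this
derivative by at most `C |δ|`. The regret `δ · P(D + x ≤ 0)` of a single step therefore exceeds the
increase of `Φ` by at most `C δ²`, and telescoping bounds the regret of a whole run.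

By linearity of expectation, DFPL's regret is `q` times the regret of the algorithm restarted on
each block plus `1 - q` times that of the algorithm which treats each block as one round; the
bound applies to the former block by block, and to the latter with block sums as steps.
-/

section PerturbedMin

variable {ν : Measure ℝ}

/-- The potential `D ↦ E[min (D + x) 0]` of Follow the Perturbed Leader with two experts, where `D`
is the lead of the first expert and `ν` is the law of the difference `x` of the perturbations. -/
noncomputable def perturbedMin (ν : Measure ℝ) (D : ℝ) : ℝ :=
  ∫ x, min (D + x) 0 ∂ν

theorem integrable_min_add_zero [IsFiniteMeasure ν] (hν : Integrable id ν) (D : ℝ) :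
    Integrable (fun x => min (D + x) 0) ν :=
  ((integrable_const D).add hν).inf (integrable_const 0)

theorem measureReal_uIcc_le {C : NNReal} (hC : ν ≤ C • volume) (u v : ℝ) :
    ν.real (Set.uIcc u v) ≤ C * |v - u| :=
  ENNReal.toReal_le_of_le_ofReal (by positivity) <| (hC _).trans_eq <| by
    rw [Measure.smul_apply, Real.volume_interval, ENNReal.smul_def,
      smul_eq_mul, ENNReal.ofReal_mul C.coe_nonneg, ENNReal.ofReal_coe_nnreal]

theorem indicator_Iic_le_min_sub_min_add_indicator_uIcc (D δ x : ℝ) :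
    (Set.Iic (-D)).indicator (fun _ => δ) x ≤
      min (D + δ + x) 0 - min (D + x) 0
        + (Set.uIcc (-D) (-(D + δ))).indicator (fun _ => |δ|) x := by
  simp only [Set.indicator, Set.mem_Iic, Set.mem_uIcc]
  rcases abs_cases δ with ⟨habs, _⟩ | ⟨habs, _⟩ <;>
  rcases min_cases (D + δ + x) 0 with ⟨hnew, _⟩ | ⟨hnew, _⟩ <;>
  rcases min_cases (D + x) 0 with ⟨hold, _⟩ | ⟨hold, _⟩ <;>
  rw [habs, hnew, hold] <;> split_ifs <;> grind

theorem mul_measureReal_Iic_neg_le [IsFiniteMeasure ν] (hν : Integrable id ν) {C : NNReal}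
    (hC : ν ≤ C • volume) (D δ : ℝ) :
    δ * ν.real (Set.Iic (-D)) ≤ perturbedMin ν (D + δ) - perturbedMin ν D + C * δ ^ 2 := by
  have hnew := integrable_min_add_zero hν (D + δ)
  have hold := integrable_min_add_zero hν D
  have hdiff : Integrable (fun x => min (D + δ + x) 0 - min (D + x) 0) ν := hnew.sub hold
  have hcross : Integrable ((Set.uIcc (-D) (-(D + δ))).indicator fun _ => |δ|) ν :=
    (integrable_const _).indicator measurableSet_uIcc
  have hflip : ν.real (Set.uIcc (-D) (-(D + δ))) ≤ C * |δ| := by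
    simpa [abs_sub_comm] using measureReal_uIcc_le hC (-D) (-(D + δ))
  calc δ * ν.real (Set.Iic (-D))
      = ∫ x, (Set.Iic (-D)).indicator (fun _ => δ) x ∂ν := by
        rw [integral_indicator_const _ measurableSet_Iic, smul_eq_mul, mul_comm]
    _ ≤ ∫ x, (min (D + δ + x) 0 - min (D + x) 0
          + (Set.uIcc (-D) (-(D + δ))).indicator (fun _ => |δ|) x) ∂ν :=
        integral_mono ((integrable_const δ).indicator measurableSet_Iic)
          (hdiff.add hcross) (indicator_Iic_le_min_sub_min_add_indicator_uIcc D δ)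
    _ = perturbedMin ν (D + δ) - perturbedMin ν D
          + ν.real (Set.uIcc (-D) (-(D + δ))) * |δ| := by
        rw [integral_add hdiff hcross, integral_sub hnew hold,
          integral_indicator_const _ measurableSet_uIcc, smul_eq_mul]
        rfl
    _ ≤ perturbedMin ν (D + δ) - perturbedMin ν D + C * |δ| * |δ| := by gcongr
    _ = perturbedMin ν (D + δ) - perturbedMin ν D + C * δ ^ 2 := by rw [← sq_abs]; ring

theorem perturbedMin_sub_perturbedMin_zero_le [IsProbabilityMeasure ν] (hν : Integrable id ν)
    (D : ℝ) :
    perturbedMin ν D - perturbedMin ν 0 ≤ min D 0 + ∫ x, |x| ∂ν := by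
  have habs : Integrable (fun x => |x|) ν := hν.abs
  have hpointwise (x : ℝ) : min (D + x) 0 - min (0 + x) 0 ≤ min D 0 + |x| := by grind
  calc perturbedMin ν D - perturbedMin ν 0
      = ∫ x, (min (D + x) 0 - min (0 + x) 0) ∂ν :=
        (integral_sub (integrable_min_add_zero hν D) (integrable_min_add_zero hν 0)).symm
    _ ≤ ∫ x, (min D 0 + |x|) ∂ν :=
        integral_mono ((integrable_min_add_zero hν D).sub (integrable_min_add_zero hν 0))
          ((integrable_const _).add habs) hpointwise
    _ = min D 0 + ∫ x, |x| ∂ν := by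
        rw [integral_add (integrable_const _) habs]; simp

variable {ι : Type*} [LinearOrder ι]

theorem sum_mul_measureReal_Iic_le_perturbedMin_sub [IsFiniteMeasure ν] (hν : Integrable id ν)
    {C : NNReal} (hC : ν ≤ C • volume) (d : ι → ℝ) (s : Finset ι) :
    ∑ t ∈ s, d t * ν.real (Set.Iic (-∑ τ ∈ s with τ < t, d τ)) ≤
      perturbedMin ν (∑ t ∈ s, d t) - perturbedMin ν 0 + C * ∑ t ∈ s, d t ^ 2 := by
  induction s using Finset.induction_on_max with
  | empty => simp
  | insert m s hm ih =>
    have hms : m ∉ s := fun h => lt_irrefl _ (hm m h)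
    have hlast : {τ ∈ insert m s | τ < m} = s := by
      rw [filter_insert, if_neg (lt_irrefl m), filter_true_of_mem hm]
    have hearlier : ∑ t ∈ s, d t * ν.real (Set.Iic (-∑ τ ∈ insert m s with τ < t, d τ)) =
        ∑ t ∈ s, d t * ν.real (Set.Iic (-∑ τ ∈ s with τ < t, d τ)) :=
      sum_congr rfl fun t ht => by rw [filter_insert, if_neg (hm t ht).not_gt]
    rw [sum_insert hms, sum_insert hms, sum_insert hms, hlast, hearlier,
      add_comm (d m) (∑ t ∈ s, d t)]
    linarith [mul_measureReal_Iic_neg_le hν hC (∑ t ∈ s, d t) (d m)]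

theorem sum_mul_measureReal_Iic_le [IsProbabilityMeasure ν] (hν : Integrable id ν)
    {C : NNReal} (hC : ν ≤ C • volume) (d : ι → ℝ) (s : Finset ι) :
    ∑ t ∈ s, d t * ν.real (Set.Iic (-∑ τ ∈ s with τ < t, d τ)) ≤
      min (∑ t ∈ s, d t) 0 + ∫ x, |x| ∂ν + C * ∑ t ∈ s, d t ^ 2 := by
  linarith [sum_mul_measureReal_Iic_le_perturbedMin_sub hν hC d s,
    perturbedMin_sub_perturbedMin_zero_le hν (∑ t ∈ s, d t)]

end PerturbedMin

section UniformNoise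

theorem isProbabilityMeasure_uniformIcc {η : ℝ} (hη : 0 < η) :
    IsProbabilityMeasure (uniformIcc η) := by
  have hne : ENNReal.ofReal η ≠ 0 := by simpa using hη
  exact ⟨by simp [uniformIcc, ENNReal.inv_mul_cancel hne]⟩

theorem isProbabilityMeasure_uniformSq {η : ℝ} (hη : 0 < η) :
    IsProbabilityMeasure (uniformSq η) := by
  have := isProbabilityMeasure_uniformIcc hη
  unfold uniformSq
  infer_instance

theorem uniformIcc_le_smul_volume {η : ℝ} (hη : 0 < η) :
    uniformIcc η ≤ η.toNNReal⁻¹ • volume := by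
  have hne : η.toNNReal ≠ 0 := by simpa using hη
  rw [uniformIcc, ENNReal.ofReal, ← ENNReal.coe_inv hne]
  exact fun s => mul_le_mul_right (Measure.restrict_le_self s) _

theorem ae_uniformIcc_mem_Icc (η : ℝ) : ∀ᵐ x ∂uniformIcc η, x ∈ Set.Icc 0 η :=
  Measure.ae_smul_measure (ae_restrict_mem measurableSet_Icc) _

theorem map_sub_prod_le_smul_volume {μ ν : Measure ℝ} [IsProbabilityMeasure μ] [SFinite ν]
    {C : NNReal} (hC : ν ≤ C • volume) :
    (μ.prod ν).map (fun x => x.1 - x.2) ≤ C • volume := by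
  refine Measure.le_iff.mpr fun s hs => ?_
  have hsub : Measurable fun x : ℝ × ℝ => x.1 - x.2 := by fun_prop
  rw [Measure.map_apply hsub hs, Measure.prod_apply (hsub hs)]
  calc ∫⁻ x, ν ((x - ·) ⁻¹' s) ∂μ
      ≤ ∫⁻ _, (C • volume) s ∂μ := lintegral_mono fun x => by
        have hx :=
          (Measure.measurePreserving_sub_left volume x).measure_preimage hs.nullMeasurableSet
        exact (hC _).trans_eq (by simp only [Measure.smul_apply, hx])
    _ = (C • volume) s := by simp

/-- The law of the difference of two independent uniform perturbations on `[0, η]`. -/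
noncomputable def uniformGap (η : ℝ) : Measure ℝ :=
  (uniformSq η).map fun r => r 0 - r 1

theorem uniformGap_eq_map_prod {η : ℝ} (hη : 0 < η) :
    uniformGap η = ((uniformIcc η).prod (uniformIcc η)).map fun x => x.1 - x.2 := by
  have := isProbabilityMeasure_uniformIcc hη
  rw [← (measurePreserving_piFinTwo fun _ : Fin 2 => uniformIcc η).map_eq,
    Measure.map_map (by fun_prop) (by fun_prop)]
  rfl

theorem isProbabilityMeasure_uniformGap {η : ℝ} (hη : 0 < η) :
    IsProbabilityMeasure (uniformGap η) := by
  have := isProbabilityMeasure_uniformSq hη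
  exact Measure.isProbabilityMeasure_map (by fun_prop)

theorem uniformGap_le_smul_volume {η : ℝ} (hη : 0 < η) :
    uniformGap η ≤ η.toNNReal⁻¹ • volume := by
  have := isProbabilityMeasure_uniformIcc hη
  rw [uniformGap_eq_map_prod hη]
  exact map_sub_prod_le_smul_volume (uniformIcc_le_smul_volume hη)

theorem ae_uniformGap_abs_le {η : ℝ} (hη : 0 < η) : ∀ᵐ x ∂uniformGap η, |x| ≤ η := by
  have := isProbabilityMeasure_uniformIcc hη
  have hmem (i : Fin 2) : ∀ᵐ r ∂uniformSq η, r i ∈ Set.Icc 0 η :=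
    (measurePreserving_eval (fun _ : Fin 2 => uniformIcc η) i).quasiMeasurePreserving.ae
      (ae_uniformIcc_mem_Icc η)
  rw [uniformGap, ae_map_iff (by fun_prop) (measurableSet_le (by fun_prop) (by fun_prop))]
  filter_upwards [hmem 0, hmem 1] with r h0 h1
  exact abs_sub_le_of_nonneg_of_le h0.1 h0.2 h1.1 h1.2

theorem integrable_id_uniformGap {η : ℝ} (hη : 0 < η) : Integrable id (uniformGap η) := by
  have := isProbabilityMeasure_uniformGap hη
  exact Integrable.of_bound measurable_id.aestronglyMeasurable η (ae_uniformGap_abs_le hη)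

theorem integral_abs_uniformGap_le {η : ℝ} (hη : 0 < η) : ∫ x, |x| ∂uniformGap η ≤ η := by
  have := isProbabilityMeasure_uniformGap hη
  simpa using integral_mono_ae (integrable_id_uniformGap hη).abs (integrable_const η)
    (ae_uniformGap_abs_le hη)

theorem uniformSq_real_setOf_add_le_add {η : ℝ} (x y : ℝ) :
    (uniformSq η).real {r | x + r 0 ≤ y + r 1} = (uniformGap η).real (Set.Iic (-(x - y))) := by
  rw [uniformGap, map_measureReal_apply (by fun_prop) measurableSet_Iic]
  congr 1
  ext r
  simp only [Set.mem_ofPred_eq, Set.mem_preimage, Set.mem_Iic]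
  constructor <;> intro h <;> linarith

theorem sum_mul_uniformGap_le {ι : Type*} [LinearOrder ι] {η : ℝ} (hη : 0 < η) (d : ι → ℝ)
    (s : Finset ι) :
    ∑ t ∈ s, d t * (uniformGap η).real (Set.Iic (-∑ τ ∈ s with τ < t, d τ)) ≤
      min (∑ t ∈ s, d t) 0 + η + (∑ t ∈ s, d t ^ 2) / η := by
  have := isProbabilityMeasure_uniformGap hη
  have hregret := sum_mul_measureReal_Iic_le (integrable_id_uniformGap hη)
    (uniformGap_le_smul_volume hη) d s
  rw [NNReal.coe_inv, Real.coe_toNNReal _ hη.le, inv_mul_eq_div] at hregret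
  linarith [integral_abs_uniformGap_le hη]

end UniformNoise

section Blocks

variable {ι κ : Type*}

theorem sum_mul_comp_sum_lt_eq_sum_fiber [Fintype ι] [Fintype κ] [LinearOrder κ] (blk : ι → κ)
    (d : ι → ℝ) (g : ℝ → ℝ) :
    ∑ t, d t * g (∑ τ with blk τ < blk t, d τ) =
      ∑ i, (∑ t with blk t = i, d t) * g (∑ j with j < i, ∑ τ with blk τ = j, d τ) := by
  have hprefix (i : κ) :
      ∑ j with j < i, ∑ τ with blk τ = j, d τ = ∑ τ with blk τ < i, d τ := by
    rw [sum_fiberwise_eq_sum_filter]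
    simp
  simp only [hprefix, sum_mul]
  rw [← sum_fiberwise univ blk]
  refine sum_congr rfl fun i _ => sum_congr rfl fun t ht => ?_
  rw [(mem_filter.mp ht).2]

theorem card_fiber_le_of_injective_prodMk [Fintype ι] [DecidableEq κ] {ℓ : ℕ} {blk : ι → κ}
    {pos : ι → Fin ℓ} (hslot : Function.Injective fun t => (blk t, pos t)) (i : κ) :
    #{t | blk t = i} ≤ ℓ := by
  have hinj : Set.InjOn pos ({t | blk t = i} : Finset ι) := fun s hs t ht hst =>
    hslot (Prod.ext (by simp_all) hst)
  simpa using card_le_card_of_injOn pos (t := univ) (fun _ _ => by simp) hinj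

theorem abs_sum_le_card {s : Finset ι} {d : ι → ℝ} (hd : ∀ t ∈ s, |d t| ≤ 1) :
    |∑ t ∈ s, d t| ≤ #s :=
  (abs_sum_le_sum_abs _ _).trans (by simpa using sum_le_card_nsmul s _ 1 hd)

theorem sum_sq_le_card {s : Finset ι} {d : ι → ℝ} (hd : ∀ t ∈ s, |d t| ≤ 1) :
    ∑ t ∈ s, d t ^ 2 ≤ #s := by
  simpa using sum_le_card_nsmul s _ 1 fun t ht => (sq_le_one_iff_abs_le_one _).mpr (hd t ht)

theorem sum_stepPhase_le [Fintype ι] [LinearOrder ι] [Fintype κ] [DecidableEq κ]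
    {η : ℝ} (hη : 0 < η) {ℓ : ℕ} {blk : ι → κ} (hblk : ∀ i, #{t | blk t = i} ≤ ℓ)
    {d : ι → ℝ} (hd : ∀ t, |d t| ≤ 1) :
    ∑ t, d t * (uniformGap η).real (Set.Iic (-∑ τ with blk τ = blk t ∧ τ < t, d τ)) ≤
      Fintype.card κ * (η + ℓ / η) - ∑ i, max 0 (-∑ t with blk t = i, d t) := by
  rw [← sum_fiberwise univ blk, ← card_univ, ← nsmul_eq_mul, ← sum_const, ← sum_sub_distrib]
  refine sum_le_sum fun i _ => ?_
  have hrestart :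
      ∑ t with blk t = i,
        d t * (uniformGap η).real (Set.Iic (-∑ τ with blk τ = blk t ∧ τ < t, d τ)) =
      ∑ t with blk t = i,
        d t * (uniformGap η).real (Set.Iic (-∑ τ ∈ {τ | blk τ = i} with τ < t, d τ)) :=
    sum_congr rfl fun t ht => by rw [filter_filter, (mem_filter.mp ht).2]
  have hsq : (∑ t with blk t = i, d t ^ 2) / η ≤ ℓ / η := by
    gcongr
    exact (sum_sq_le_card fun t _ => hd t).trans (mod_cast hblk i)
  have hmin : min (∑ t with blk t = i, d t) 0 = -max 0 (-∑ t with blk t = i, d t) := by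
    rw [← min_neg_neg, neg_zero, neg_neg, min_comm]
  linarith [sum_mul_uniformGap_le hη d {t | blk t = i}]

theorem sum_blockPhase_le [Fintype ι] [Fintype κ] [LinearOrder κ]
    {η : ℝ} (hη : 0 < η) {ℓ : ℕ} {blk : ι → κ} (hblk : ∀ i, #{t | blk t = i} ≤ ℓ)
    {d : ι → ℝ} (hd : ∀ t, |d t| ≤ 1) :
    ∑ t, d t * (uniformGap η).real (Set.Iic (-∑ τ with blk τ < blk t, d τ)) ≤
      ℓ / η * ∑ i, |∑ t with blk t = i, d t| + η := by
  set δ : κ → ℝ := fun i => ∑ t with blk t = i, d t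
  have hsq : ∑ i, δ i ^ 2 ≤ ℓ * ∑ i, |δ i| := by
    rw [mul_sum]
    refine sum_le_sum fun i _ => ?_
    rw [← sq_abs, sq]
    gcongr
    exact (abs_sum_le_card fun t _ => hd t).trans (mod_cast hblk i)
  rw [sum_mul_comp_sum_lt_eq_sum_fiber blk d fun x => (uniformGap η).real (Set.Iic (-x))]
  calc ∑ i, δ i * (uniformGap η).real (Set.Iic (-∑ j with j < i, δ j))
      ≤ min (∑ i, δ i) 0 + η + (∑ i, δ i ^ 2) / η := sum_mul_uniformGap_le hη δ univ
    _ ≤ 0 + η + ℓ * (∑ i, |δ i|) / η := by gcongr; exact min_le_right _ _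
    _ = ℓ / η * ∑ i, |δ i| + η := by ring

end Blocks

section DFPL

theorem bernoulliBool_real_true {q : ℝ} (hq : 0 ≤ q) : (bernoulliBool q).real {true} = q := by
  simp [bernoulliBool, Measure.real, hq]

theorem bernoulliBool_real_false {q : ℝ} (hq : q ≤ 1) :
    (bernoulliBool q).real {false} = 1 - q := by
  simp [bernoulliBool, Measure.real, hq]

theorem isProbabilityMeasure_bernoulliBool {q : ℝ} (hq0 : 0 ≤ q) (hq1 : q ≤ 1) :
    IsProbabilityMeasure (bernoulliBool q) := by
  refine ⟨?_⟩
  simp [bernoulliBool, ← ENNReal.ofReal_add hq0 (sub_nonneg.mpr hq1)]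

theorem isProbabilityMeasure_DFPLMeasure (b ℓ : ℕ) {q η' η : ℝ} (hq0 : 0 ≤ q) (hq1 : q ≤ 1)
    (hη' : 0 < η') (hη : 0 < η) : IsProbabilityMeasure (DFPLMeasure b ℓ q η' η) := by
  have := isProbabilityMeasure_bernoulliBool hq0 hq1
  have := isProbabilityMeasure_uniformSq hη'
  have := isProbabilityMeasure_uniformSq hη
  unfold DFPLMeasure
  infer_instance

variable {b ℓ : ℕ}

/-- The event that the perturbation which DFPL uses at position `k` of block `i` lies in `A`, if
the block is a step phase, respectively in `B`, if it is a block phase. -/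
def phaseEvent (i : Fin b) (k : Fin ℓ) (A B : Set (Fin 2 → ℝ)) : Set (DFPLSpace b ℓ) :=
  {ω | if ω.1 i = true then ω.2.1 (i, k) ∈ A else ω.2.2 i ∈ B}

theorem phaseEvent_eq_union (i : Fin b) (k : Fin ℓ) (A B : Set (Fin 2 → ℝ)) :
    phaseEvent i k A B =
      (Function.eval i ⁻¹' ({true} : Set Bool)) ×ˢ ((Function.eval (i, k) ⁻¹' A) ×ˢ Set.univ) ∪
      (Function.eval i ⁻¹' ({false} : Set Bool)) ×ˢ (Set.univ ×ˢ (Function.eval i ⁻¹' B)) := by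
  ext ω
  cases hω : ω.1 i <;> simp [phaseEvent, hω]

theorem measurableSet_phaseEvent (i : Fin b) (k : Fin ℓ) {A B : Set (Fin 2 → ℝ)}
    (hA : MeasurableSet A) (hB : MeasurableSet B) : MeasurableSet (phaseEvent i k A B) := by
  rw [phaseEvent_eq_union]
  have hcoin (y : Bool) : MeasurableSet (Function.eval i ⁻¹' {y} : Set (Fin b → Bool)) :=
    measurable_pi_apply i (measurableSet_singleton y)
  exact ((hcoin true).prod ((hA.preimage (measurable_pi_apply (i, k))).prod .univ)).union
    ((hcoin false).prod (MeasurableSet.univ.prod (hB.preimage (measurable_pi_apply i))))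

theorem DFPLMeasure_real_phaseEvent {q η' η : ℝ} (hq0 : 0 ≤ q) (hq1 : q ≤ 1) (hη' : 0 < η')
    (hη : 0 < η) (i : Fin b) (k : Fin ℓ) {A B : Set (Fin 2 → ℝ)} (hA : MeasurableSet A)
    (hB : MeasurableSet B) :
    (DFPLMeasure b ℓ q η' η).real (phaseEvent i k A B) =
      q * (uniformSq η').real A + (1 - q) * (uniformSq η).real B := by
  have := isProbabilityMeasure_bernoulliBool hq0 hq1
  have := isProbabilityMeasure_uniformSq hη'
  have := isProbabilityMeasure_uniformSq hη
  have := isProbabilityMeasure_DFPLMeasure b ℓ hq0 hq1 hη' hη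
  have hcoin (y : Bool) :=
    (measurePreserving_eval (fun _ : Fin b => bernoulliBool q) i).measureReal_preimage
      (measurableSet_singleton y).nullMeasurableSet
  have hstep := (measurePreserving_eval (fun _ : Fin b × Fin ℓ => uniformSq η')
    (i, k)).measureReal_preimage hA.nullMeasurableSet
  have hblock := (measurePreserving_eval (fun _ : Fin b => uniformSq η)
    i).measureReal_preimage hB.nullMeasurableSet
  rw [phaseEvent_eq_union, measureReal_union]
  · simp only [DFPLMeasure, measureReal_prod_prod, hcoin, hstep, hblock, probReal_univ,
      bernoulliBool_real_true hq0, bernoulliBool_real_false hq1, mul_one, one_mul]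
  · exact Set.disjoint_prod.mpr (.inl ((Set.disjoint_singleton.mpr Bool.noConfusion).preimage _))
  · exact (measurable_pi_apply i (measurableSet_singleton false)).prod
      (MeasurableSet.univ.prod (hB.preimage (measurable_pi_apply i)))

theorem integral_sum_sub_sum_eq {Ω ι : Type*} [MeasurableSpace Ω] [Fintype ι] {μ : Measure Ω}
    [IsFiniteMeasure μ] (p : ι → Fin 2 → ℝ) {a : ι → Ω → Fin 2}
    (ha : ∀ t, MeasurableSet (a t ⁻¹' {1})) :
    ∫ ω, (∑ t, p t 0 - ∑ t, p t (a t ω)) ∂μ =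
      ∑ t, (p t 0 - p t 1) * μ.real (a t ⁻¹' {1}) := by
  have hregret (ω : Ω) : ∑ t, p t 0 - ∑ t, p t (a t ω) =
      ∑ t, (a t ⁻¹' {1}).indicator (fun _ => p t 0 - p t 1) ω := by
    rw [← sum_sub_distrib]
    refine sum_congr rfl fun t _ => ?_
    obtain h | h : a t ω = 0 ∨ a t ω = 1 := by omega
    all_goals simp [Set.indicator, h]
  simp only [hregret]
  rw [integral_finsetSum _ fun t _ => (integrable_const _).indicator (ha t)]
  refine sum_congr rfl fun t _ => ?_
  rw [integral_indicator_const _ (ha t), smul_eq_mul, mul_comm]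

theorem injective_prodMk_of_div_of_mod {T : ℕ} {blk : Fin T → Fin b} {pos : Fin T → Fin ℓ}
    (hblk : ∀ t, (blk t : ℕ) = (t : ℕ) / ℓ) (hpos : ∀ t, (pos t : ℕ) = (t : ℕ) % ℓ) :
    Function.Injective fun t => (blk t, pos t) := fun s t hst => by
  obtain ⟨hdiv, hmod⟩ := Prod.mk.inj hst
  exact Fin.ext (Nat.ext_div_mod (by rw [← hblk, ← hblk, hdiv]) (by rw [← hpos, ← hpos, hmod]))

theorem dfpl_regret_decomposition_general {ι : Type*} [Fintype ι] [LinearOrder ι]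
    {η' η q : ℝ} (hη' : 0 < η') (hη : 0 < η) (hq0 : 0 ≤ q) (hq1 : q ≤ 1)
    {p : ι → Fin 2 → ℝ} (hp : ∀ t, |p t 0 - p t 1| ≤ 1)
    {blk : ι → Fin b} {pos : ι → Fin ℓ} (hslot : Function.Injective fun t => (blk t, pos t))
    {P : Fin b → Fin 2 → ℝ} (hP : ∀ i e, P i e = ∑ τ with blk τ = i, p τ e)
    {a : ι → DFPLSpace b ℓ → Fin 2}
    (ha : ∀ t ω, a t ω =
      if ω.1 (blk t) = true then
        (if (∑ τ with blk τ = blk t ∧ τ < t, p τ 0) + ω.2.1 (blk t, pos t) 0 >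
            (∑ τ with blk τ = blk t ∧ τ < t, p τ 1) + ω.2.1 (blk t, pos t) 1 then 0 else 1)
      else
        (if (∑ τ with blk τ < blk t, p τ 0) + ω.2.2 (blk t) 0 >
            (∑ τ with blk τ < blk t, p τ 1) + ω.2.2 (blk t) 1 then 0 else 1)) :
    ∫ ω, (∑ t, p t 0 - ∑ t, p t (a t ω)) ∂(DFPLMeasure b ℓ q η' η) ≤
      q * (b * (η' + ℓ / η') - ∑ i, max 0 (P i 1 - P i 0))
        + (1 - q) * (ℓ / η * ∑ i, |P i 0 - P i 1| + η) := by
  have := isProbabilityMeasure_DFPLMeasure b ℓ hq0 hq1 hη' hη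
  have hevent (t : ι) : a t ⁻¹' {1} = phaseEvent (blk t) (pos t)
      {r | (∑ τ with blk τ = blk t ∧ τ < t, p τ 0) + r 0 ≤
        (∑ τ with blk τ = blk t ∧ τ < t, p τ 1) + r 1}
      {r | (∑ τ with blk τ < blk t, p τ 0) + r 0 ≤ (∑ τ with blk τ < blk t, p τ 1) + r 1} := by
    ext ω
    simp only [Set.mem_preimage, Set.mem_singleton_iff, ha, phaseEvent, Set.mem_ofPred_eq]
    split_ifs <;> simp_all
  have hmeas (x y : ℝ) : MeasurableSet {r : Fin 2 → ℝ | x + r 0 ≤ y + r 1} :=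
    measurableSet_le (by fun_prop) (by fun_prop)
  have hprob (t : ι) : (DFPLMeasure b ℓ q η' η).real (a t ⁻¹' {1}) =
      q * (uniformGap η').real (Set.Iic (-∑ τ with blk τ = blk t ∧ τ < t, (p τ 0 - p τ 1)))
        + (1 - q) * (uniformGap η).real (Set.Iic (-∑ τ with blk τ < blk t, (p τ 0 - p τ 1))) := by
    rw [hevent, DFPLMeasure_real_phaseEvent hq0 hq1 hη' hη _ _ (hmeas _ _) (hmeas _ _),
      uniformSq_real_setOf_add_le_add, uniformSq_real_setOf_add_le_add, sum_sub_distrib,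
      sum_sub_distrib]
  have hgap (i : Fin b) : ∑ τ with blk τ = i, (p τ 0 - p τ 1) = P i 0 - P i 1 := by
    rw [hP, hP, sum_sub_distrib]
  have hcard := card_fiber_le_of_injective_prodMk hslot
  have hstep := sum_stepPhase_le hη' hcard hp
  have hblock := sum_blockPhase_le hη hcard hp
  simp only [hgap, neg_sub, Fintype.card_fin] at hstep hblock
  rw [integral_sum_sub_sum_eq p fun t => by
    rw [hevent]; exact measurableSet_phaseEvent _ _ (hmeas _ _) (hmeas _ _)]
  refine le_of_eq_of_le ?_ (add_le_add (mul_le_mul_of_nonneg_left hstep hq0)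
    (mul_le_mul_of_nonneg_left hblock (sub_nonneg.mpr hq1)))
  rw [mul_sum, mul_sum, ← sum_add_distrib]
  exact sum_congr rfl fun t _ => by rw [hprob]; ring

end DFPL

/-- **The main regret decomposition for DFPL (inequality (4) of the paper).**
With `T = bℓ`, payoffs `p^t ∈ [0,1]²` such that expert 1 (index `0`) is best in
hindsight, block payoff vectors `P^i`, and DFPL run with block-phase noise `η > 0`,
step-phase noise `η' = √ℓ` and step-phase probability `q ∈ [0,1]`, the expected regret
`E[R] = E[Σ_t p^t[1] − Σ_t p^t[a^t]]` satisfies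
`E[R] ≤ 2qb√ℓ − q·Σ_i max(0, P^i[2] − P^i[1]) + (ℓ/η)·Σ_i |P^i[1] − P^i[2]| + η`.
Block indices are zero-based: time `t` lies in block `t / ℓ` at position `t % ℓ`. -/
theorem dfpl_regret_decomposition
    (ℓ b T : ℕ) (hℓ : 0 < ℓ) (hb : 0 < b) (hT : T = b * ℓ)
    (η q : ℝ) (hη : 0 < η) (hq0 : 0 ≤ q) (hq1 : q ≤ 1)
    (p : Fin T → Fin 2 → ℝ) (hp : ∀ t i, p t i ∈ Set.Icc (0 : ℝ) 1)
    (hbest : ∑ t, p t 1 ≤ ∑ t, p t 0)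
    (blk : Fin T → Fin b) (hblk : ∀ t, (blk t : ℕ) = (t : ℕ) / ℓ)
    (pos : Fin T → Fin ℓ) (hpos : ∀ t, (pos t : ℕ) = (t : ℕ) % ℓ)
    (P : Fin b → Fin 2 → ℝ)
    (hP : ∀ i e, P i e = ∑ τ ∈ univ.filter (fun τ : Fin T => blk τ = i), p τ e)
    (a : Fin T → DFPLSpace b ℓ → Fin 2)
    (ha : ∀ t ω, a t ω =
      if ω.1 (blk t) = true then
        (if (∑ τ ∈ univ.filter (fun τ : Fin T => blk τ = blk t ∧ τ < t), p τ 0)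
              + ω.2.1 (blk t, pos t) 0 >
            (∑ τ ∈ univ.filter (fun τ : Fin T => blk τ = blk t ∧ τ < t), p τ 1)
              + ω.2.1 (blk t, pos t) 1
         then 0 else 1)
      else
        (if (∑ τ ∈ univ.filter (fun τ : Fin T => blk τ < blk t), p τ 0)
              + ω.2.2 (blk t) 0 >
            (∑ τ ∈ univ.filter (fun τ : Fin T => blk τ < blk t), p τ 1)
              + ω.2.2 (blk t) 1
         then 0 else 1)) :
    ∫ ω, (∑ t, p t 0 - ∑ t, p t (a t ω)) ∂(DFPLMeasure b ℓ q (Real.sqrt ℓ) η) ≤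
      2 * q * b * Real.sqrt ℓ - q * ∑ i, max 0 (P i 1 - P i 0)
        + (ℓ / η) * ∑ i, |P i 0 - P i 1| + η := by
  have hregret := dfpl_regret_decomposition_general (Real.sqrt_pos.mpr (Nat.cast_pos.mpr hℓ)) hη
    hq0 hq1 (fun t => abs_sub_le_of_nonneg_of_le (hp t 0).1 (hp t 0).2 (hp t 1).1 (hp t 1).2)
    (injective_prodMk_of_div_of_mod hblk hpos) hP ha
  have hnonneg : 0 ≤ q * (ℓ / η * ∑ i, |P i 0 - P i 1| + η) := by positivity
  rw [Real.div_sqrt] at hregret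
  linarith
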